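/- Let $d, T, K \geq 1$ be integers and let $\lambda > 0$. For each $t \in \{1,\dots,T\}$ and $k \in \{1,\dots,K\}$ let $x_{t,k} \in \mathbb{R}^d$ with $\|x_{t,k}\|_2 \leq 1$ and let $w_{t,k} \in [0,1]$ satisfy $\sum_{k=1}^{K} w_{t,k}^2 \leq \lambda$ for every $t$. Define $A_0 = \lambda I_d$ and $A_t = A_{t-1} + \sum_{k=1}^{K} w_{t,k}^2\, x_{t,k} x_{t,k}^{\top}$ for $t \geq 1$. Then $\sum_{t=1}^{T} \sum_{k=1}^{K} w_{t,k}^2\, x_{t,k}^{\top} A_{t-1}^{-1} x_{t,k} \leq 2 d \ln\Bigl(1 + \frac{1}{\lambda d}\sum_{t=1}^{T}\sum_{k=1}^{K} w_{t,k}^2\Bigr)$. -/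

import Mathlib

/-!
Put `S_t = A_t - A_{t-1}`. The width of round `t` is `u_t = tr (A_{t-1}⁻¹ S_t)`, and
`det A_t ≥ det A_{t-1} * (1 + u_t)`, because a product of factors `1 + μᵢ` with `μᵢ ≥ 0` is at
least `1 + ∑ μᵢ`. Inversion reverses the Loewner order, so `u_t ≤ tr (A₀⁻¹ S_t) = tr S_t / λ ≤ 1`;
on `[0, 1]` one has `u ≤ 2 log (1 + u)`, and the sum of the `u_t` telescopes to at most
`2 log (det A_T / det A₀)`. AM-GM on the eigenvalues of `A_T` bounds its determinant by
`(tr A_T / d) ^ d`, and the trace grows by at most `∑ₖ w²` per round.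
-/

open Finset Matrix Real

theorem one_add_sum_le_prod_one_add {ι R : Type*} [CommSemiring R] [PartialOrder R]
    [IsOrderedRing R] (s : Finset ι) {f : ι → R} (hf : ∀ i ∈ s, 0 ≤ f i) :
    1 + ∑ i ∈ s, f i ≤ ∏ i ∈ s, (1 + f i) := by
  induction s using Finset.cons_induction with
  | empty => simp
  | cons a s ha ih =>
    obtain ⟨hfa, hfs⟩ := Finset.forall_mem_cons _ _ |>.mp hf
    rw [Finset.sum_cons, Finset.prod_cons]
    calc 1 + (f a + ∑ i ∈ s, f i)
        ≤ 1 + (f a + ∑ i ∈ s, f i) + f a * ∑ i ∈ s, f i :=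
          le_add_of_nonneg_right (mul_nonneg hfa (Finset.sum_nonneg hfs))
      _ = (1 + f a) * (1 + ∑ i ∈ s, f i) := by ring
      _ ≤ (1 + f a) * ∏ i ∈ s, (1 + f i) :=
          mul_le_mul_of_nonneg_left (ih hfs) (add_nonneg zero_le_one hfa)

theorem prod_le_sum_div_card_pow_card {ι : Type*} [Fintype ι] [Nonempty ι] {f : ι → ℝ}
    (hf : ∀ i, 0 ≤ f i) : ∏ i, f i ≤ ((∑ i, f i) / Fintype.card ι) ^ Fintype.card ι := by
  have amgm := Real.geom_mean_le_arith_mean univ 1 f (by simp) (by simp [Fintype.card_pos])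
    fun i _ ↦ hf i
  simp only [Pi.one_apply, rpow_one, one_mul, sum_const, card_univ, nsmul_eq_mul, mul_one] at amgm
  calc ∏ i, f i = ((∏ i, f i) ^ (Fintype.card ι : ℝ)⁻¹) ^ Fintype.card ι :=
        (rpow_inv_natCast_pow (prod_nonneg fun i _ ↦ hf i) Fintype.card_ne_zero).symm
    _ ≤ _ := pow_le_pow_left₀ (rpow_nonneg (prod_nonneg fun i _ ↦ hf i) _) amgm _

theorem le_two_mul_log_one_add {u : ℝ} (hu0 : 0 ≤ u) (hu1 : u ≤ 1) : u ≤ 2 * log (1 + u) := by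
  have hlog : 2 * u / (u + 2) ≤ log (1 + u) := le_log_one_add_of_nonneg hu0
  rw [div_le_iff₀ (by linarith)] at hlog
  nlinarith

theorem trace_mul_sum_smul_vecMulVec {n κ R : Type*} [Fintype n] [Fintype κ] [CommSemiring R]
    (M : Matrix n n R) (c : κ → R) (x : κ → n → R) :
    (M * ∑ k, c k • vecMulVec (x k) (x k)).trace = ∑ k, c k * (x k ⬝ᵥ M *ᵥ x k) := by
  simp only [Matrix.mul_sum, trace_sum, Matrix.mul_smul, trace_smul, mul_vecMulVec,
    trace_vecMulVec, smul_eq_mul, dotProduct_comm (M *ᵥ _)]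

section Loewner

open scoped ComplexOrder MatrixOrder

variable {n 𝕜 : Type*} [RCLike 𝕜]

theorem posSemidef_sum_smul_vecMulVec_star [Finite n] {κ : Type*} [Fintype κ] {c : κ → 𝕜}
    (hc : ∀ k, 0 ≤ c k) (x : κ → n → 𝕜) :
    (∑ k, c k • vecMulVec (x k) (star (x k))).PosSemidef :=
  posSemidef_sum _ fun k _ ↦ (posSemidef_vecMulVec_self_star (x k)).smul (hc k)

theorem posDef_of_le {A B : Matrix n n 𝕜} (hA : A.PosDef) (hAB : A ≤ B) : B.PosDef := by
  simpa using hA.add_posSemidef (le_iff.mp hAB)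

variable [Fintype n]

theorem trace_mul_nonneg {A B : Matrix n n 𝕜} (hA : A.PosSemidef) (hB : B.PosSemidef) :
    0 ≤ (A * B).trace := by
  classical
  obtain ⟨C, rfl⟩ := CStarAlgebra.nonneg_iff_eq_star_mul_self.mp hB.nonneg
  rw [← Matrix.mul_assoc, trace_mul_comm, ← Matrix.mul_assoc]
  exact (hA.mul_mul_conjTranspose_same C).trace_nonneg

variable [DecidableEq n]

/-- Both sides are Schur complements of the block matrix `[B, 1; 1, A⁻¹]`. -/
theorem inv_le_inv_of_posDef {A B : Matrix n n 𝕜} (hA : A.PosDef) (hAB : A ≤ B) :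
    B⁻¹ ≤ A⁻¹ := by
  have hB : B.PosDef := posDef_of_le hA hAB
  have : Invertible B := hB.isUnit.invertible
  have : Invertible A⁻¹ := hA.inv.isUnit.invertible
  have schur := (hB.fromBlocks₁₁ 1 A⁻¹).symm.trans (hA.inv.fromBlocks₂₂ B 1)
  rw [nonsing_inv_nonsing_inv A hA.det_pos.ne'.isUnit] at schur
  simpa [le_iff] using schur.mpr (by simpa using le_iff.mp hAB)

theorem det_one_add_eq_prod_eigenvalues {M : Matrix n n 𝕜} (hM : M.IsHermitian) :
    (1 + M).det = ∏ i, (1 + (hM.eigenvalues i : 𝕜)) := by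
  conv_lhs => rw [hM.spectral_theorem,
    ← map_one (Unitary.conjStarAlgAut 𝕜 _ hM.eigenvectorUnitary), ← map_add, ← diagonal_one,
    diagonal_add]
  simp [-Unitary.conjStarAlgAut_apply]

theorem one_add_trace_le_det_one_add {M : Matrix n n 𝕜} (hM : M.PosSemidef) :
    1 + M.trace ≤ (1 + M).det := by
  rw [det_one_add_eq_prod_eigenvalues hM.1, hM.1.trace_eq_sum_eigenvalues]
  exact one_add_sum_le_prod_one_add univ fun i _ ↦
    RCLike.ofReal_nonneg.mpr (hM.eigenvalues_nonneg i)

/-- With `S = Cᴴ C`, cyclicity of the trace and of `det (1 + X Y)` replaces `A⁻¹ S`, which need not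
be Hermitian, by the positive semidefinite `C A⁻¹ Cᴴ`. -/
theorem det_mul_one_add_trace_inv_mul_le {A S : Matrix n n 𝕜} (hA : A.PosDef)
    (hS : S.PosSemidef) : A.det * (1 + (A⁻¹ * S).trace) ≤ (A + S).det := by
  obtain ⟨C, rfl⟩ := CStarAlgebra.nonneg_iff_eq_star_mul_self.mp hS.nonneg
  have hfactor : A + star C * C = A * (1 + A⁻¹ * star C * C) := by
    rw [mul_add, mul_one, Matrix.mul_assoc, mul_nonsing_inv_cancel_left A _ hA.det_pos.ne'.isUnit]
  rw [hfactor, det_mul, det_one_add_mul_comm, ← Matrix.mul_assoc, trace_mul_comm,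
    ← Matrix.mul_assoc]
  exact mul_le_mul_of_nonneg_left
    (one_add_trace_le_det_one_add (hA.inv.posSemidef.mul_mul_conjTranspose_same C)) hA.det_pos.le

theorem det_le_trace_div_card_pow_card [Nonempty n] {A : Matrix n n 𝕜} (hA : A.PosSemidef) :
    A.det ≤ (A.trace / Fintype.card n) ^ Fintype.card n := by
  rw [hA.1.det_eq_prod_eigenvalues, hA.1.trace_eq_sum_eigenvalues]
  exact_mod_cast prod_le_sum_div_card_pow_card hA.eigenvalues_nonneg

theorem trace_inv_mul_sub_le_two_mul_log_det {A B : Matrix n n ℝ} (hA : A.PosDef) (hAB : A ≤ B)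
    (hle : (A⁻¹ * (B - A)).trace ≤ 1) :
    (A⁻¹ * (B - A)).trace ≤ 2 * (log B.det - log A.det) := by
  have hu : 0 ≤ (A⁻¹ * (B - A)).trace := trace_mul_nonneg hA.inv.posSemidef (le_iff.mp hAB)
  have hdet : A.det * (1 + (A⁻¹ * (B - A)).trace) ≤ B.det := by
    simpa using det_mul_one_add_trace_inv_mul_le hA (le_iff.mp hAB)
  calc (A⁻¹ * (B - A)).trace ≤ 2 * log (1 + (A⁻¹ * (B - A)).trace) :=
        le_two_mul_log_one_add hu hle
    _ = 2 * (log (A.det * (1 + (A⁻¹ * (B - A)).trace)) - log A.det) := by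
        rw [log_mul hA.det_pos.ne' (by positivity), add_sub_cancel_left]
    _ ≤ 2 * (log B.det - log A.det) := by
        have := hA.det_pos
        gcongr

theorem sum_trace_inv_mul_sub_le_two_mul_log_det {A : ℕ → Matrix n n ℝ} {T : ℕ}
    (hA0 : (A 0).PosDef) (hA : MonotoneOn A (Set.Iic T))
    (hle : ∀ t < T, ((A 0)⁻¹ * (A (t + 1) - A t)).trace ≤ 1) :
    ∑ t ∈ range T, ((A t)⁻¹ * (A (t + 1) - A t)).trace ≤
      2 * (log (A T).det - log (A 0).det) := by
  rw [← sum_range_sub (fun t ↦ log (A t).det), mul_sum]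
  refine sum_le_sum fun t ht ↦ ?_
  have htT : t < T := mem_range.mp ht
  have hstep : A t ≤ A (t + 1) := hA htT.le htT t.le_succ
  have hA0t : A 0 ≤ A t := hA T.zero_le htT.le t.zero_le
  have hanti : ((A t)⁻¹ * (A (t + 1) - A t)).trace ≤ ((A 0)⁻¹ * (A (t + 1) - A t)).trace := by
    rw [← sub_nonneg, ← trace_sub, ← sub_mul]
    exact trace_mul_nonneg (inv_le_inv_of_posDef hA0 hA0t) hstep
  exact trace_inv_mul_sub_le_two_mul_log_det (posDef_of_le hA0 hA0t) hstep
    (hanti.trans (hle t htT))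

theorem log_det_le_card_mul_log_trace_div_card [Nonempty n] {A : Matrix n n ℝ} (hA : A.PosDef) :
    log A.det ≤ Fintype.card n * log (A.trace / Fintype.card n) := by
  rw [← log_pow]
  exact log_le_log hA.det_pos (det_le_trace_div_card_pow_card hA.posSemidef)

theorem sum_trace_inv_mul_sub_le_card_mul_log_trace [Nonempty n] {A : ℕ → Matrix n n ℝ} {T : ℕ}
    {lam : ℝ} (hlam : 0 < lam) (hA0 : A 0 = lam • 1) (hA : MonotoneOn A (Set.Iic T))
    (hle : ∀ t < T, (A (t + 1) - A t).trace ≤ lam) :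
    ∑ t ∈ range T, ((A t)⁻¹ * (A (t + 1) - A t)).trace ≤
      2 * Fintype.card n * log ((A T).trace / (lam * Fintype.card n)) := by
  have hA0pos : (A 0).PosDef := hA0 ▸ PosDef.one.smul hlam
  have hATpos : (A T).PosDef := posDef_of_le hA0pos (hA T.zero_le Set.self_mem_Iic T.zero_le)
  have hinv : (A 0)⁻¹ = lam⁻¹ • 1 := inv_eq_right_inv (by simp [hA0, hlam.ne'])
  have hwidth : ∀ t < T, ((A 0)⁻¹ * (A (t + 1) - A t)).trace ≤ 1 := fun t ht ↦ by
    rw [hinv, smul_mul, one_mul, trace_smul, smul_eq_mul, inv_mul_le_one₀ hlam]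
    exact hle t ht
  have hdet0 : log (A 0).det = Fintype.card n * log lam := by
    rw [hA0, det_smul, det_one, mul_one, log_pow]
  calc ∑ t ∈ range T, ((A t)⁻¹ * (A (t + 1) - A t)).trace
      ≤ 2 * (log (A T).det - log (A 0).det) :=
        sum_trace_inv_mul_sub_le_two_mul_log_det hA0pos hA hwidth
    _ ≤ 2 * (Fintype.card n * log ((A T).trace / Fintype.card n) - Fintype.card n * log lam) := by
        rw [hdet0]
        gcongr
        exact log_det_le_card_mul_log_trace_div_card hATpos
    _ = 2 * Fintype.card n * log ((A T).trace / (lam * Fintype.card n)) := by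
        rw [mul_comm lam, ← div_div,
          log_div (div_pos hATpos.trace_pos (by positivity)).ne' hlam.ne']
        ring

end Loewner

open scoped MatrixOrder in
theorem stmt_6_general {n κ : Type*} [Fintype n] [DecidableEq n] [Nonempty n] [Fintype κ] {T : ℕ}
    {lam : ℝ} (hlam : 0 < lam) {x : Fin T → κ → n → ℝ} (hx : ∀ t k, x t k ⬝ᵥ x t k ≤ 1)
    {w : Fin T → κ → ℝ} (hwsum : ∀ t, ∑ k, w t k ^ 2 ≤ lam)
    {A : ℕ → Matrix n n ℝ} (hA0 : A 0 = lam • 1)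
    (hAt : ∀ t : Fin T, A (t + 1) = A t + ∑ k, w t k ^ 2 • vecMulVec (x t k) (x t k)) :
    ∑ t, ∑ k, w t k ^ 2 * (x t k ⬝ᵥ (A t)⁻¹ *ᵥ x t k) ≤
      2 * Fintype.card n * log (1 + 1 / (lam * Fintype.card n) * ∑ t, ∑ k, w t k ^ 2) := by
  have hstep (t : Fin T) :
      A (t + 1) - A t = ∑ k, w t k ^ 2 • vecMulVec (x t k) (x t k) := by
    rw [hAt, add_sub_cancel_left]
  have hmono : MonotoneOn A (Set.Iic T) :=
    monotoneOn_of_le_succ Set.ordConnected_Iic fun t _ _ ht ↦ le_iff.mpr <|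
      hstep ⟨t, ht⟩ ▸ posSemidef_sum_smul_vecMulVec_star (fun k ↦ sq_nonneg (w ⟨t, ht⟩ k)) _
  have htrace (t : Fin T) : (A (t + 1) - A t).trace ≤ ∑ k, w t k ^ 2 := by
    rw [hstep, ← one_mul (∑ k, _), trace_mul_sum_smul_vecMulVec]
    simp only [one_mulVec]
    exact sum_le_sum fun k _ ↦ mul_le_of_le_one_right (sq_nonneg _) (hx t k)
  have htraceT : (A T).trace ≤ lam * Fintype.card n + ∑ t, ∑ k, w t k ^ 2 := by
    have htrace0 : (A 0).trace = lam * Fintype.card n := by simp [hA0]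
    rw [← sub_le_iff_le_add', ← htrace0, ← sum_range_sub (fun t ↦ (A t).trace),
      ← Fin.sum_univ_eq_sum_range (fun t ↦ (A (t + 1)).trace - (A t).trace)]
    exact sum_le_sum fun t _ ↦ trace_sub (A (t + 1)) (A t) ▸ htrace t
  have hA0T : A 0 ≤ A T := hmono T.zero_le Set.self_mem_Iic T.zero_le
  have htracepos : 0 < (A T).trace := (posDef_of_le (hA0 ▸ PosDef.one.smul hlam) hA0T).trace_pos
  calc ∑ t, ∑ k, w t k ^ 2 * (x t k ⬝ᵥ (A t)⁻¹ *ᵥ x t k)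
      = ∑ t ∈ range T, ((A t)⁻¹ * (A (t + 1) - A t)).trace := by
        rw [← Fin.sum_univ_eq_sum_range (fun t ↦ ((A t)⁻¹ * (A (t + 1) - A t)).trace)]
        simp only [hstep, trace_mul_sum_smul_vecMulVec]
    _ ≤ 2 * Fintype.card n * log ((A T).trace / (lam * Fintype.card n)) :=
        sum_trace_inv_mul_sub_le_card_mul_log_trace hlam hA0 hmono fun t ht ↦
          (htrace ⟨t, ht⟩).trans (hwsum ⟨t, ht⟩)
    _ ≤ 2 * Fintype.card n * log (1 + 1 / (lam * Fintype.card n) * ∑ t, ∑ k, w t k ^ 2) := by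
        gcongr
        rw [div_le_iff₀ (by positivity)]
        exact htraceT.trans_eq (by field_simp)

/-- Lemma 5 of the paper's appendix (after Lemma 4.4 of Li et al. 2016): the
elliptical-potential bound on the cumulative weighted squared confidence widths.
Here `A ↑t` (for `t : Fin T`) is the design matrix `A_{t-1}` at the start of round `t`. -/
theorem stmt_6 (d T K : ℕ) (hd : 1 ≤ d) (hT : 1 ≤ T) (hK : 1 ≤ K)
    (lam : ℝ) (hlam : 0 < lam)
    (x : Fin T → Fin K → (Fin d → ℝ))
    (hx : ∀ t k, Real.sqrt (x t k ⬝ᵥ x t k) ≤ 1)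
    (w : Fin T → Fin K → ℝ)
    (hw : ∀ t k, w t k ∈ Set.Icc (0 : ℝ) 1)
    (hwsum : ∀ t, ∑ k : Fin K, (w t k) ^ 2 ≤ lam)
    (A : ℕ → Matrix (Fin d) (Fin d) ℝ)
    (hA0 : A 0 = lam • (1 : Matrix (Fin d) (Fin d) ℝ))
    (hAt : ∀ t : Fin T,
      A (t + 1) = A t + ∑ k : Fin K, (w t k) ^ 2 • vecMulVec (x t k) (x t k)) :
    ∑ t : Fin T, ∑ k : Fin K, (w t k) ^ 2 * (x t k ⬝ᵥ ((A t)⁻¹ *ᵥ x t k)) ≤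
      2 * d * Real.log (1 + (1 / (lam * d)) * ∑ t : Fin T, ∑ k : Fin K, (w t k) ^ 2) := by
  have : Nonempty (Fin d) := ⟨⟨0, hd⟩⟩
  simpa using stmt_6_general hlam (fun t k ↦ by simpa using hx t k) hwsum hA0 hAt
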